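/- Let (X, 𝓔) be a connected, coarsely normal coarse space and let 𝓑 be the bornology of coarsely bounded sets. Define a relation b on the power set of X by: A b B if and only if there exists E ∈ 𝓔 such that E[A] ∩ B is unbounded. Then b is a coarse proximity on X (with respect to 𝓑). -/

import Mathlib

/-!
The relation `b` and the relation `≺` determine each other: since bounded sets are closed under
subsets, `A ≺ B` holds iff `E[A] \ B` is bounded for every entourage `E`, that is, iff `A` is not
close to the complement of `B` (`prec_iff`). Under this translation the strong axiom is coarse
normality: an interpolant `A ≺ C ≺ Bᶜ` yields the separating set `Cᶜ`.

The other axioms use that bounded sets are closed under subsets, under finite unions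
(this needs connectedness) and under `E[·]` for an entourage `E`. Symmetry follows from the inclusion
`E[A] ∩ B ⊆ E[E⁻¹[B] ∩ A]`.
-/

/-- A bornology on a set `X`, given as a family `𝓑` of subsets of `X`:
singletons are bounded, subsets of bounded sets are bounded, and
finite unions of bounded sets are bounded. -/
structure IsBornology (X : Type*) (𝓑 : Set (Set X)) : Prop where
  singleton_mem : ∀ x : X, {x} ∈ 𝓑
  subset_mem : ∀ A ∈ 𝓑, ∀ C ⊆ A, C ∈ 𝓑
  union_mem : ∀ A ∈ 𝓑, ∀ C ∈ 𝓑, A ∪ C ∈ 𝓑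

/-- A coarse proximity on a set `X` with bornology `𝓑`: a relation `b` on
the power set of `X` satisfying symmetry, the boundedness axiom, the
unbounded-intersection axiom, the union axiom, and the strong axiom. -/
structure IsCoarseProximity (X : Type*) (𝓑 : Set (Set X)) (b : Set X → Set X → Prop) : Prop where
  symm : ∀ A B : Set X, b A B → b B A
  not_bounded : ∀ A B : Set X, b A B → A ∉ 𝓑 ∧ B ∉ 𝓑
  inter : ∀ A B : Set X, A ∩ B ∉ 𝓑 → b A B
  union : ∀ A B C : Set X, b (A ∪ B) C ↔ (b A C ∨ b B C)
  strong : ∀ A B : Set X, ¬ b A B → ∃ E : Set X, ¬ b A E ∧ ¬ b (Set.univ \ E) B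

/-- A coarse structure on `X`: a collection `𝓔` of subsets of `X × X` (entourages)
containing the diagonal, closed under subsets, inverses, unions, and composition. -/
structure IsCoarseStructure {X : Type*} (𝓔 : Set (Set (X × X))) : Prop where
  diag_mem : {p : X × X | p.1 = p.2} ∈ 𝓔
  subset_mem : ∀ E ∈ 𝓔, ∀ F ⊆ E, F ∈ 𝓔
  inv_mem : ∀ E ∈ 𝓔, {p : X × X | (p.2, p.1) ∈ E} ∈ 𝓔
  union_mem : ∀ E ∈ 𝓔, ∀ F ∈ 𝓔, E ∪ F ∈ 𝓔
  comp_mem : ∀ E ∈ 𝓔, ∀ F ∈ 𝓔, {p : X × X | ∃ z : X, (p.1, z) ∈ E ∧ (z, p.2) ∈ F} ∈ 𝓔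

/-- `(X, 𝓔)` is coarsely connected: each point of `X × X` belongs to some entourage. -/
def CoarselyConnected {X : Type*} (𝓔 : Set (Set (X × X))) : Prop :=
  ∀ p : X × X, ∃ E ∈ 𝓔, p ∈ E

/-- `E[A] = {x ∈ X | ∃ a ∈ A, (x, a) ∈ E}`. -/
def entImg {X : Type*} (E : Set (X × X)) (A : Set X) : Set X :=
  {x : X | ∃ a ∈ A, (x, a) ∈ E}

/-- A subset `A ⊆ X` is coarsely bounded if `A × A` is an entourage. -/
def CoarselyBounded {X : Type*} (𝓔 : Set (Set (X × X))) (A : Set X) : Prop :=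
  A ×ˢ A ∈ 𝓔

/-- `A ≺ B`: for every entourage `E ∈ 𝓔`, `E[A] ⊆ B ∪ K` for some bounded `K`. -/
def Prec {X : Type*} (𝓔 : Set (Set (X × X))) (A B : Set X) : Prop :=
  ∀ E ∈ 𝓔, ∃ K : Set X, CoarselyBounded 𝓔 K ∧ entImg E A ⊆ B ∪ K

/-- `(X, 𝓔)` is coarsely normal: whenever `A ≺ B` there is `C` with `A ≺ C ≺ B`. -/
def CoarselyNormal {X : Type*} (𝓔 : Set (Set (X × X))) : Prop :=
  ∀ A B : Set X, Prec 𝓔 A B → ∃ C : Set X, Prec 𝓔 A C ∧ Prec 𝓔 C B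

lemma CoarselyBounded.mono {X : Type*} {𝓔 : Set (Set (X × X))} (hE : IsCoarseStructure 𝓔)
    {A B : Set X} (hB : CoarselyBounded 𝓔 B) (h : A ⊆ B) : CoarselyBounded 𝓔 A :=
  hE.subset_mem _ hB _ (Set.prod_mono h h)

/-- `E[A] × E[A]` is contained in `E ∘ (A × A) ∘ E⁻¹`. -/
lemma CoarselyBounded.entImg {X : Type*} {𝓔 : Set (Set (X × X))} (hE : IsCoarseStructure 𝓔)
    {A : Set X} (hA : CoarselyBounded 𝓔 A) {E : Set (X × X)} (h : E ∈ 𝓔) :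
    CoarselyBounded 𝓔 (entImg E A) := by
  refine hE.subset_mem _ (hE.comp_mem _ (hE.comp_mem _ h _ hA) _ (hE.inv_mem _ h)) _ ?_
  rintro ⟨x, y⟩ ⟨⟨a, ha, hxa⟩, ⟨c, hc, hyc⟩⟩
  exact ⟨c, ⟨a, hxa, ha, hc⟩, hyc⟩

/-- If `(a, c)` lies in the entourage `F` with `a ∈ A` and `c ∈ B`, then
`A × B ⊆ (A × A) ∘ F ∘ (B × B)`, so the mixed parts of `(A ∪ B) × (A ∪ B)` are controlled. -/
lemma CoarselyBounded.union {X : Type*} {𝓔 : Set (Set (X × X))} (hE : IsCoarseStructure 𝓔)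
    (hconn : CoarselyConnected 𝓔) {A B : Set X} (hA : CoarselyBounded 𝓔 A)
    (hB : CoarselyBounded 𝓔 B) : CoarselyBounded 𝓔 (A ∪ B) := by
  rcases A.eq_empty_or_nonempty with rfl | ⟨a, ha⟩
  · simpa using hB
  rcases B.eq_empty_or_nonempty with rfl | ⟨c, hc⟩
  · simpa using hA
  obtain ⟨F, hF, hac⟩ := hconn (a, c)
  have hAB := hE.comp_mem _ (hE.comp_mem _ hA _ hF) _ hB
  refine hE.subset_mem _ (hE.union_mem _ (hE.union_mem _ hA _ hB) _
    (hE.union_mem _ hAB _ (hE.inv_mem _ hAB))) _ ?_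
  rintro ⟨x, y⟩ ⟨hx | hx, hy | hy⟩
  · exact Or.inl (Or.inl ⟨hx, hy⟩)
  · exact Or.inr (Or.inl ⟨c, ⟨a, ⟨hx, ha⟩, hac⟩, hc, hy⟩)
  · exact Or.inr (Or.inr ⟨c, ⟨a, ⟨hy, ha⟩, hac⟩, hc, hx⟩)
  · exact Or.inl (Or.inr ⟨hx, hy⟩)

lemma prec_iff {X : Type*} {𝓔 : Set (Set (X × X))} (hE : IsCoarseStructure 𝓔) {A B : Set X} :
    Prec 𝓔 A B ↔ ∀ E ∈ 𝓔, CoarselyBounded 𝓔 (entImg E A ∩ Bᶜ) := by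
  refine forall₂_congr fun E _ => ⟨?_, fun h => ⟨_, h, ?_⟩⟩
  · rintro ⟨K, hK, hsub⟩
    exact hK.mono hE fun x hx => (hsub hx.1).resolve_left hx.2
  · intro x hx
    by_cases hB : x ∈ B
    · exact Or.inl hB
    · exact Or.inr ⟨hx, hB⟩

/-- For a connected, coarsely normal coarse space `(X, 𝓔)` with bornology `𝓑` of
coarsely bounded sets, the relation `A b B` iff there is `E ∈ 𝓔` with `E[A] ∩ B`
unbounded is a coarse proximity on `X`. -/
theorem stmt17 {X : Type*} (𝓔 : Set (Set (X × X)))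
    (hE : IsCoarseStructure 𝓔) (hconn : CoarselyConnected 𝓔)
    (hnorm : CoarselyNormal 𝓔) :
    IsCoarseProximity X {A : Set X | CoarselyBounded 𝓔 A}
      (fun A B => ∃ E ∈ 𝓔, ¬ CoarselyBounded 𝓔 (entImg E A ∩ B)) := by
  refine ⟨?_, ?_, ?_, ?_, ?_⟩
  · rintro A B ⟨E, h, hu⟩
    refine ⟨_, hE.inv_mem E h, fun hb => hu ((hb.entImg hE h).mono hE ?_)⟩
    rintro x ⟨⟨a, ha, hxa⟩, hx⟩
    exact ⟨a, ⟨⟨x, hx, hxa⟩, ha⟩, hxa⟩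
  · rintro A B ⟨E, h, hu⟩
    exact ⟨fun hA => hu ((CoarselyBounded.entImg hE hA h).mono hE Set.inter_subset_left),
      fun hB => hu (CoarselyBounded.mono hE hB Set.inter_subset_right)⟩
  · intro A B hu
    exact ⟨_, hE.diag_mem, fun hb => hu (hb.mono hE fun x hx => ⟨⟨x, hx.1, rfl⟩, hx.2⟩)⟩
  · intro A B C
    constructor
    · rintro ⟨E, h, hu⟩
      by_contra! hcon
      refine hu (((hcon.1 E h).union hE hconn (hcon.2 E h)).mono hE ?_)
      rintro x ⟨⟨a, ha | ha, hxa⟩, hx⟩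
      · exact Or.inl ⟨⟨a, ha, hxa⟩, hx⟩
      · exact Or.inr ⟨⟨a, ha, hxa⟩, hx⟩
    · rintro (⟨E, h, hu⟩ | ⟨E, h, hu⟩)
      · refine ⟨E, h, fun hb => hu (hb.mono hE ?_)⟩
        rintro x ⟨⟨a, ha, hxa⟩, hx⟩
        exact ⟨⟨a, Or.inl ha, hxa⟩, hx⟩
      · refine ⟨E, h, fun hb => hu (hb.mono hE ?_)⟩
        rintro x ⟨⟨a, ha, hxa⟩, hx⟩
        exact ⟨⟨a, Or.inr ha, hxa⟩, hx⟩
  · intro A B hAB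
    push Not at hAB
    obtain ⟨C, hAC, hCB⟩ := hnorm A Bᶜ ((prec_iff hE).2 (by simpa using hAB))
    rw [prec_iff hE] at hAC hCB
    rw [compl_compl] at hCB
    refine ⟨Cᶜ, fun ⟨E, h, hu⟩ => hu (hAC E h), fun ⟨E, h, hu⟩ => hu ?_⟩
    rw [← Set.compl_eq_univ_sdiff, compl_compl]
    exact hCB E h
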